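/- arXiv:0910.4715 — 2 statements merged into one kernel-verified Lean document; each statement's English description precedes it below -/
import Mathlib

section
/- Let m, n be natural numbers with 0 ≤ m ≤ n, and let x > 1 be real. Then d^m/dx^m [P_n(x)·log(x−1)] = P_n^{(m)}(x)·log(x−1) + (ψ(n+m+1) − ψ(n−m+1))·P_n^{(m)}(x) − (−1)^{n+m}·2^{−m} Σ_{k=0}^{n−m} (−1)^k·((k+n+m)!/(k!·(k+m)!·(n−m−k)!))·(2ψ(k+n+m+1) − ψ(k+m+1)) · ((x+1)/2)^k + (−1)^n·((n+m)!/(n−m)!)·(x−1)^{−m} Σ_{k=0}^{n} (−1)^k·((k+n)!/(k!·(k+m)!·(n−k)!))·(2ψ(k+n+1) − ψ(k+m+1)) · ((x+1)/2)^k. -/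
open Finset Real

/-- The Legendre polynomial `P_n`, via its explicit expansion
`P_n(x) = ∑_{k=0}^{n} ((n+k)!/((k!)² (n−k)!)) ((x−1)/2)^k`. -/
noncomputable def legendreP (n : ℕ) (x : ℝ) : ℝ :=
  ∑ k ∈ Finset.range (n + 1),
    (((n + k).factorial : ℝ) / (((k.factorial : ℝ)) ^ 2 * ((n - k).factorial : ℝ))) *
      ((x - 1) / 2) ^ k

/-- The harmonic number `H_i = ∑_{r=1}^{i} 1/r`. -/
noncomputable def harm (i : ℕ) : ℝ := ∑ r ∈ Finset.range i, (1 : ℝ) / (r + 1)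

/-- The digamma function at a positive integer `j`: `ψ(j) = H_{j−1} − γ`. -/
noncomputable def psi (j : ℕ) : ℝ := harm (j - 1) - Real.eulerMascheroniConstant

/-!
In powers of `(x + 1) / 2`, `P_n^{(m)}` equals `(x - 1)^{-m}` times an explicit polynomial of degree
`n` with coefficients `c_k`. Inserting weights `h k` next to the `c_k` gives a family of functions
whose derivative is again of this kind, with `m + 1` for `m` and `h` corrected by a multiple of the
difference `h (k + 1) - h k`. For constant `h` the correction vanishes, which gives `P_n^{(m)}`
itself. For the weight `2 ψ(k + n + 1) - ψ(k + m + 1)` it produces exactly a multiple of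
`P_n^{(m+1)}`, the increment of `ψ(n + m + 1) - ψ(n - m + 1)`, and the term `-P_n^{(m)} / (x - 1)`
which cancels the derivative of the logarithm. The other digamma sum is a polynomial that is merely
differentiated `m` times; the two sums coincide at `m = 0`, so the formula follows by induction.
-/

section Calculus

variable {𝕜 : Type*} [NontriviallyNormedField 𝕜]

lemma iteratedDeriv_eqOn_of_hasDerivAt {E : Type*} [NormedAddCommGroup E] [NormedSpace 𝕜 E]
    {F : ℕ → 𝕜 → E} {s : Set 𝕜} {N : ℕ} (hs : IsOpen s)
    (hF : ∀ m < N, ∀ x ∈ s, HasDerivAt (F m) (F (m + 1) x) x) :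
    ∀ m ≤ N, Set.EqOn (iteratedDeriv m (F 0)) (F m) s := by
  intro m
  induction m with
  | zero => exact fun _ x _ => by rw [iteratedDeriv_zero]
  | succ m ih =>
    intro hm x hx
    have hloc : iteratedDeriv m (F 0) =ᶠ[nhds x] F m :=
      (ih (by omega)).eventuallyEq_of_mem (hs.mem_nhds hx)
    rw [iteratedDeriv_succ, hloc.deriv_eq, (hF m hm x hx).deriv]

lemma hasDerivAt_sum_mul_pow (a : ℕ → 𝕜) (N : ℕ) {u : 𝕜 → 𝕜} {u' x : 𝕜}
    (hu : HasDerivAt u u' x) :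
    HasDerivAt (fun y => ∑ k ∈ range (N + 1), a k * u y ^ k)
      ((∑ k ∈ range N, (k + 1) * a (k + 1) * u x ^ k) * u') x := by
  have hterm : ∀ k ∈ range (N + 1),
      HasDerivAt (fun y => a k * u y ^ k) (a k * (k * u x ^ (k - 1) * u')) x :=
    fun k _ => (hu.fun_pow k).const_mul (a k)
  refine (HasDerivAt.fun_sum hterm).congr_deriv ?_
  rw [sum_range_succ', sum_mul]
  simp only [Nat.cast_zero, zero_mul, mul_zero, add_zero, Nat.add_sub_cancel]
  refine sum_congr rfl fun k _ => ?_
  push_cast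
  ring

end Calculus

lemma mul_sum_succ_mul_pow {R : Type*} [CommSemiring R] (a : ℕ → R) (N : ℕ) (s : R) :
    s * ∑ k ∈ range N, (k + 1) * a (k + 1) * s ^ k = ∑ k ∈ range (N + 1), k * a k * s ^ k := by
  rw [sum_range_succ', mul_sum]
  simp only [Nat.cast_zero, zero_mul, add_zero]
  refine sum_congr rfl fun k _ => ?_
  push_cast
  ring

/-- The coefficients `c_k` of the expansion of `P_n^{(m)}` in powers of `(x + 1) / 2`, up to a
factor independent of `k`. Meant for `k ≤ n`: the subtraction `n - k` is truncated. -/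
noncomputable def legendreCoeff (n m k : ℕ) : ℝ :=
  (-1 : ℝ) ^ k * ((k + n).factorial : ℝ) /
    ((k.factorial : ℝ) * ((k + m).factorial : ℝ) * ((n - k).factorial : ℝ))

lemma legendreCoeff_eq_mul_succ (n m k : ℕ) :
    legendreCoeff n m k = (k + m + 1) * legendreCoeff n (m + 1) k := by
  unfold legendreCoeff
  rw [← add_assoc k m 1, Nat.factorial_succ (k + m)]
  push_cast
  field_simp

lemma succ_mul_legendreCoeff_succ {n k : ℕ} (m : ℕ) (hk : k < n) :
    (k + 1) * legendreCoeff n m (k + 1) = -((k + n + 1) * (n - k) * legendreCoeff n (m + 1) k) := by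
  obtain ⟨d, rfl⟩ : ∃ d, n = k + d + 1 := Nat.exists_eq_add_of_lt hk
  unfold legendreCoeff
  rw [show k + 1 + (k + d + 1) = k + (k + d + 1) + 1 by ring, show k + 1 + m = k + (m + 1) by ring,
    show k + d + 1 - (k + 1) = d by omega, show k + d + 1 - k = d + 1 by omega,
    Nat.factorial_succ (k + (k + d + 1)), Nat.factorial_succ k, Nat.factorial_succ d]
  push_cast
  field_simp
  ring

lemma aeval_shiftedLegendre (n : ℕ) (y : ℝ) :
    Polynomial.aeval y (Polynomial.shiftedLegendre n) =
      ∑ k ∈ range (n + 1), legendreCoeff n 0 k * y ^ k := by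
  rw [Polynomial.shiftedLegendre, map_sum]
  refine sum_congr rfl fun k hk => ?_
  simp only [map_mul, map_pow, Polynomial.aeval_X, map_neg, map_one, map_natCast]
  rw [Nat.cast_choose ℝ (mem_range_succ_iff.1 hk), Nat.cast_choose ℝ (Nat.le_add_right n k),
    Nat.add_sub_cancel_left, legendreCoeff, add_comm n k, add_zero]
  field_simp

lemma legendreP_eq_aeval_shiftedLegendre (n : ℕ) (x : ℝ) :
    legendreP n x = Polynomial.aeval ((1 - x) / 2) (Polynomial.shiftedLegendre n) := by
  rw [aeval_shiftedLegendre, legendreP]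
  refine sum_congr rfl fun k _ => ?_
  rw [show (1 - x) / 2 = -1 * ((x - 1) / 2) by ring, mul_pow, legendreCoeff, add_comm n k, add_zero]
  have hsign : (-1 : ℝ) ^ k * (-1) ^ k = 1 := by rw [← mul_pow]; simp
  field_simp
  linear_combination (-((x - 1) / 2) ^ k) * hsign

lemma contDiff_legendreP (n : ℕ) : ContDiff ℝ ⊤ (legendreP n) := by
  unfold legendreP
  fun_prop

lemma hasDerivAt_iteratedDeriv_legendreP (n m : ℕ) (x : ℝ) :
    HasDerivAt (iteratedDeriv m (legendreP n)) (iteratedDeriv (m + 1) (legendreP n) x) x := by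
  rw [iteratedDeriv_succ]
  exact ((contDiff_legendreP n).differentiable_iteratedDeriv m
    (by exact_mod_cast WithTop.coe_lt_top _)).differentiableAt.hasDerivAt

/-- The expansion of `P_n^{(m)}` in powers of `(x + 1) / 2` with its `k`-th term multiplied by the
weight `h k`, for `m ≤ n` and `x ≠ 1`. -/
noncomputable def legendreSum (n m : ℕ) (h : ℕ → ℝ) (x : ℝ) : ℝ :=
  (-1 : ℝ) ^ n * ((n + m).factorial : ℝ) / ((n - m).factorial : ℝ) * (x - 1) ^ (-(m : ℤ)) *
    ∑ k ∈ range (n + 1), legendreCoeff n m k * h k * ((x + 1) / 2) ^ k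

namespace legendreSum

variable {n m : ℕ} {x : ℝ}

lemma add (h g : ℕ → ℝ) :
    legendreSum n m (fun k => h k + g k) x = legendreSum n m h x + legendreSum n m g x := by
  simp only [legendreSum, mul_add, add_mul, sum_add_distrib]

lemma const_mul (c : ℝ) (h : ℕ → ℝ) :
    legendreSum n m (fun k => c * h k) x = c * legendreSum n m h x := by
  simp only [legendreSum, mul_left_comm _ c, mul_assoc c, ← mul_sum]

lemma zero_one_eq_legendreP : legendreSum n 0 (fun _ => 1) x = legendreP n x := by
  rw [legendreP_eq_aeval_shiftedLegendre, Polynomial.shiftedLegendre_eval_symm,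
    show 1 - (1 - x) / 2 = (x + 1) / 2 by ring, aeval_shiftedLegendre]
  simp [legendreSum, Nat.factorial_ne_zero]

lemma succ_eq_mul_sum (hm : m < n) (hx : x ≠ 1) (h : ℕ → ℝ) :
    legendreSum n (m + 1) h x =
      (-1 : ℝ) ^ n * ((n + m).factorial : ℝ) / ((n - m).factorial : ℝ) * (x - 1) ^ (-(m : ℤ)) *
        ((n - m) * (n + m + 1) / (x - 1) *
          ∑ k ∈ range (n + 1), legendreCoeff n (m + 1) k * h k * ((x + 1) / 2) ^ k) := by
  have hx' : x - 1 ≠ 0 := sub_ne_zero.2 hx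
  obtain ⟨d, rfl⟩ : ∃ d, n = m + d + 1 := Nat.exists_eq_add_of_lt hm
  rw [legendreSum, show m + d + 1 - (m + 1) = d by omega, show m + d + 1 - m = d + 1 by omega,
    ← add_assoc _ m 1, Nat.factorial_succ (m + d + 1 + m), Nat.factorial_succ d, Nat.cast_succ m,
    neg_add, ← sub_eq_add_neg, zpow_sub_one₀ hx']
  push_cast
  field_simp
  ring

lemma succ_linear_weight (hm : m < n) (hx : x ≠ 1) :
    legendreSum n (m + 1) (fun k => k + m + 1) x =
      (n - m) * (n + m + 1) * (legendreSum n m (fun _ => 1) x / (x - 1)) := by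
  rw [succ_eq_mul_sum hm hx, legendreSum]
  simp only [legendreCoeff_eq_mul_succ n m, mul_one, mul_comm _ (legendreCoeff _ _ _)]
  ring

lemma hasDerivAt_sum (n m : ℕ) (h : ℕ → ℝ) (hx : x ≠ 1) :
    HasDerivAt (fun y : ℝ => ∑ k ∈ range (n + 1), legendreCoeff n m k * h k * ((y + 1) / 2) ^ k)
      ((∑ k ∈ range (n + 1), legendreCoeff n (m + 1) k *
        (k * (k + m + 1) * h k + (k + n + 1) * (n - k) * h (k + 1)) * ((x + 1) / 2) ^ k) /
          (x - 1)) x := by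
  set a : ℕ → ℝ := fun k => legendreCoeff n m k * h k
  set s : ℝ := (x + 1) / 2 with hs
  set D := ∑ k ∈ range n, (k + 1) * a (k + 1) * s ^ k
  have hderiv : HasDerivAt (fun y : ℝ => ∑ k ∈ range (n + 1), a k * ((y + 1) / 2) ^ k)
      (D * (1 / 2)) x :=
    hasDerivAt_sum_mul_pow a n (((hasDerivAt_id x).add_const 1).div_const 2)
  have hD : -D = ∑ k ∈ range (n + 1),
      legendreCoeff n (m + 1) k * ((k + n + 1) * (n - k) * h (k + 1)) * s ^ k := by
    rw [sum_range_succ, sub_self, mul_zero, zero_mul, mul_zero, zero_mul, add_zero,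
      ← sum_neg_distrib]
    refine sum_congr rfl fun k hk => ?_
    linear_combination
      (-(h (k + 1) * s ^ k)) * succ_mul_legendreCoeff_succ m (mem_range.1 hk)
  have hsD : s * D = ∑ k ∈ range (n + 1),
      legendreCoeff n (m + 1) k * (k * (k + m + 1) * h k) * s ^ k := by
    rw [mul_sum_succ_mul_pow]
    refine sum_congr rfl fun k _ => ?_
    linear_combination (k * h k * s ^ k) * legendreCoeff_eq_mul_succ n m k
  refine hderiv.congr_deriv ?_
  rw [eq_div_iff (sub_ne_zero.2 hx)]
  simp only [mul_add, add_mul, sum_add_distrib] at hsD hD ⊢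
  linear_combination hsD + hD - D * hs

/-- Uses that `(k - m) (k + m + 1) + (k + n + 1) (n - k) = (n - m) (n + m + 1)` is independent
of `k`, so that only differences of `h` appear in the correction. -/
lemma mul_sum_corrected_weight (hm : m < n) (h : ℕ → ℝ) (s : ℝ) :
    (n - m) * (n + m + 1) * ∑ k ∈ range (n + 1), legendreCoeff n (m + 1) k *
        (h k + (k + n + 1) * (n - k) / ((n - m) * (n + m + 1)) * (h (k + 1) - h k)) * s ^ k =
      ∑ k ∈ range (n + 1), legendreCoeff n (m + 1) k *
        (k * (k + m + 1) * h k + (k + n + 1) * (n - k) * h (k + 1)) * s ^ k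
      - m * ∑ k ∈ range (n + 1), legendreCoeff n m k * h k * s ^ k := by
  rw [mul_sum, mul_sum, ← sum_sub_distrib]
  refine sum_congr rfl fun k _ => ?_
  have hnm : (n : ℝ) - m ≠ 0 := sub_ne_zero.2 (Nat.cast_lt.2 hm).ne'
  have hnm' : (n : ℝ) + m + 1 ≠ 0 := by positivity
  rw [legendreCoeff_eq_mul_succ n m k]
  field_simp
  ring

protected lemma hasDerivAt (hm : m < n) (hx : x ≠ 1) (h : ℕ → ℝ) :
    HasDerivAt (legendreSum n m h)
      (legendreSum n (m + 1)
        (fun k => h k + (k + n + 1) * (n - k) / ((n - m) * (n + m + 1)) * (h (k + 1) - h k)) x)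
      x := by
  have hx' : x - 1 ≠ 0 := sub_ne_zero.2 hx
  have hpow : HasDerivAt (fun y : ℝ => (y - 1) ^ (-(m : ℤ)))
      (-(m / (x - 1)) * (x - 1) ^ (-(m : ℤ))) x := by
    refine ((hasDerivAt_zpow (-(m : ℤ)) (x - 1) (.inl hx')).comp_sub_const x 1).congr_deriv ?_
    rw [zpow_sub_one₀ hx']
    push_cast
    ring
  refine ((hpow.const_mul _).fun_mul (hasDerivAt_sum n m h hx)).congr_deriv ?_
  rw [succ_eq_mul_sum hm hx, div_mul_eq_mul_div _ (x - 1), mul_sum_corrected_weight hm]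
  ring

end legendreSum

lemma iteratedDeriv_legendreP {n m : ℕ} (hmn : m ≤ n) {x : ℝ} (hx : x ≠ 1) :
    iteratedDeriv m (legendreP n) x = legendreSum n m (fun _ => 1) x := by
  have hstep : ∀ m < n, ∀ y ∈ ({1}ᶜ : Set ℝ), HasDerivAt (legendreSum n m fun _ => 1)
      (legendreSum n (m + 1) (fun _ => 1) y) y := fun m hm y hy => by
    simpa only [sub_self, mul_zero, add_zero] using legendreSum.hasDerivAt hm hy fun _ => 1
  have hzero : legendreP n = legendreSum n 0 fun _ => 1 :=
    funext fun _ => legendreSum.zero_one_eq_legendreP.symm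
  rw [hzero]
  exact iteratedDeriv_eqOn_of_hasDerivAt (F := fun m => legendreSum n m fun _ => 1)
    isOpen_compl_singleton hstep m hmn hx

lemma psi_add_one (j : ℕ) : psi (j + 1) = psi j + 1 / j := by
  cases j with
  | zero => simp [psi]
  | succ j => simp only [psi, harm, Nat.add_sub_cancel, sum_range_succ]; push_cast; ring

/-- The combination of digamma values attached to the `k`-th coefficient of `P_n^{(m)}`. -/
noncomputable def digammaWeight (n m k : ℕ) : ℝ := 2 * psi (k + n + 1) - psi (k + m + 1)

lemma digammaWeight_succ_right (n m k : ℕ) :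
    digammaWeight n m (k + 1) = digammaWeight n m k + 2 / (k + n + 1) - 1 / (k + m + 1) := by
  rw [digammaWeight, digammaWeight, add_right_comm k 1 n, add_right_comm k 1 m,
    psi_add_one (k + n + 1), psi_add_one (k + m + 1)]
  push_cast
  ring

lemma digammaWeight_succ_middle (n m k : ℕ) :
    digammaWeight n (m + 1) k = digammaWeight n m k - 1 / (k + m + 1) := by
  rw [digammaWeight, digammaWeight, ← add_assoc k m 1, psi_add_one (k + m + 1)]
  push_cast
  ring

lemma digammaWeight_add_correction {n m : ℕ} (hm : m < n) (k : ℕ) :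
    digammaWeight n m k + (k + n + 1) * (n - k) / ((n - m) * (n + m + 1)) *
        (digammaWeight n m (k + 1) - digammaWeight n m k) =
      digammaWeight n (m + 1) k + (1 / (n + m + 1) + 1 / (n - m)) * 1
        + -1 / ((n - m) * (n + m + 1)) * (k + m + 1) := by
  have hnm : (n : ℝ) - m ≠ 0 := sub_ne_zero.2 (Nat.cast_lt.2 hm).ne'
  have hnm' : (n : ℝ) + m + 1 ≠ 0 := by positivity
  have hkm : (k : ℝ) + m + 1 ≠ 0 := by positivity
  have hkn : (k : ℝ) + n + 1 ≠ 0 := by positivity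
  rw [digammaWeight_succ_right, digammaWeight_succ_middle]
  field_simp
  ring

lemma hasDerivAt_legendreSum_digammaWeight {n m : ℕ} (hm : m < n) {x : ℝ} (hx : x ≠ 1) :
    HasDerivAt (legendreSum n m (digammaWeight n m))
      (legendreSum n (m + 1) (digammaWeight n (m + 1)) x
        + (1 / (n + m + 1) + 1 / (n - m)) * iteratedDeriv (m + 1) (legendreP n) x
        - iteratedDeriv m (legendreP n) x / (x - 1)) x := by
  refine (legendreSum.hasDerivAt hm hx _).congr_deriv ?_
  have hnm : (n : ℝ) - m ≠ 0 := sub_ne_zero.2 (Nat.cast_lt.2 hm).ne'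
  have hnm' : (n : ℝ) + m + 1 ≠ 0 := by positivity
  simp only [digammaWeight_add_correction hm]
  rw [legendreSum.add, legendreSum.add, legendreSum.const_mul,
    legendreSum.const_mul, legendreSum.succ_linear_weight hm hx,
    iteratedDeriv_legendreP hm hx, iteratedDeriv_legendreP hm.le hx]
  field_simp
  ring

/-- The polynomial digamma sum; it is the `m`-th derivative of the one with `m = 0`, which is
`legendreSum n 0 (digammaWeight n 0)`. -/
noncomputable def digammaPoly (n m : ℕ) (x : ℝ) : ℝ :=
  (-1 : ℝ) ^ (n + m) * (2 : ℝ) ^ (-(m : ℤ)) *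
    ∑ k ∈ range (n - m + 1),
      (-1 : ℝ) ^ k * ((k + n + m).factorial : ℝ) /
          ((k.factorial : ℝ) * ((k + m).factorial : ℝ) * ((n - m - k).factorial : ℝ)) *
        (2 * psi (k + n + m + 1) - psi (k + m + 1)) * ((x + 1) / 2) ^ k

lemma digammaPoly_zero (n : ℕ) (x : ℝ) :
    digammaPoly n 0 x = legendreSum n 0 (digammaWeight n 0) x := by
  simp [digammaPoly, legendreSum, legendreCoeff, digammaWeight, Nat.factorial_ne_zero]

lemma hasDerivAt_digammaPoly {n m : ℕ} (hm : m < n) (x : ℝ) :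
    HasDerivAt (digammaPoly n m) (digammaPoly n (m + 1) x) x := by
  obtain ⟨d, rfl⟩ : ∃ d, n = m + d + 1 := Nat.exists_eq_add_of_lt hm
  have hbase : HasDerivAt (fun y : ℝ => (y + 1) / 2) (1 / 2) x :=
    ((hasDerivAt_id x).add_const 1).div_const 2
  refine ((hasDerivAt_sum_mul_pow _ _ hbase).const_mul _).congr_deriv ?_
  rw [digammaPoly, show m + d + 1 - m = d + 1 by omega, show m + d + 1 - (m + 1) = d by omega,
    Nat.cast_succ m, neg_add, ← sub_eq_add_neg, zpow_sub_one₀ two_ne_zero, sum_mul, mul_sum,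
    mul_sum]
  refine sum_congr rfl fun k _ => ?_
  rw [show k + (m + d + 1) + (m + 1) = k + 1 + (m + d + 1) + m by ring,
    show k + (m + 1) = k + 1 + m by ring, Nat.add_sub_add_right, Nat.factorial_succ k]
  push_cast
  field_simp
  ring

/-- The closed form of the `m`-th derivative of `P_n(x) log |x - 1|`. -/
noncomputable def legendreMulLogDeriv (n m : ℕ) (x : ℝ) : ℝ :=
  iteratedDeriv m (legendreP n) x * Real.log |x - 1|
    + (psi (n + m + 1) - psi (n - m + 1)) * iteratedDeriv m (legendreP n) x
    - digammaPoly n m x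
    + legendreSum n m (digammaWeight n m) x

lemma legendreMulLogDeriv_zero (n : ℕ) :
    legendreMulLogDeriv n 0 = fun y => legendreP n y * Real.log |y - 1| := by
  funext y
  simp [legendreMulLogDeriv, digammaPoly_zero]

lemma hasDerivAt_legendreMulLogDeriv {n m : ℕ} (hm : m < n) {x : ℝ} (hx : x ≠ 1) :
    HasDerivAt (legendreMulLogDeriv n m) (legendreMulLogDeriv n (m + 1) x) x := by
  have hlog : HasDerivAt (fun y : ℝ => Real.log |y - 1|) (1 / (x - 1)) x := by
    simpa only [Real.log_abs, id] using
      ((hasDerivAt_id x).sub_const 1).log (sub_ne_zero.2 hx)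
  have hP := hasDerivAt_iteratedDeriv_legendreP n m x
  have hupper : psi (n + (m + 1) + 1) = psi (n + m + 1) + 1 / (n + m + 1) := by
    rw [← add_assoc n m 1, psi_add_one (n + m + 1)]
    push_cast
    ring
  have hlower : psi (n - m + 1) = psi (n - (m + 1) + 1) + 1 / (n - m) := by
    rw [psi_add_one (n - m), Nat.cast_sub hm.le, show n - (m + 1) + 1 = n - m by omega]
  refine ((((hP.fun_mul hlog).fun_add (hP.const_mul _)).fun_sub
    (hasDerivAt_digammaPoly hm x)).fun_add
      (hasDerivAt_legendreSum_digammaWeight hm hx)).congr_deriv ?_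
  rw [legendreMulLogDeriv, hupper, hlower]
  ring

theorem stmt_5_general (m n : ℕ) (hmn : m ≤ n) (x : ℝ) (hx : x ≠ 1) :
    iteratedDeriv m (fun y => legendreP n y * Real.log |y - 1|) x =
      iteratedDeriv m (legendreP n) x * Real.log |x - 1|
      + (psi (n + m + 1) - psi (n - m + 1)) * iteratedDeriv m (legendreP n) x
      - (-1 : ℝ) ^ (n + m) * (2 : ℝ) ^ (-(m : ℤ)) *
          ∑ k ∈ Finset.range (n - m + 1),
            (-1 : ℝ) ^ k * ((k + n + m).factorial : ℝ) /
                ((k.factorial : ℝ) * ((k + m).factorial : ℝ) * ((n - m - k).factorial : ℝ)) *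
              (2 * psi (k + n + m + 1) - psi (k + m + 1)) * ((x + 1) / 2) ^ k
      + (-1 : ℝ) ^ n * ((n + m).factorial : ℝ) / ((n - m).factorial : ℝ) *
            (x - 1) ^ (-(m : ℤ)) *
          ∑ k ∈ Finset.range (n + 1),
            (-1 : ℝ) ^ k * ((k + n).factorial : ℝ) /
                ((k.factorial : ℝ) * ((k + m).factorial : ℝ) * ((n - k).factorial : ℝ)) *
              (2 * psi (k + n + 1) - psi (k + m + 1)) * ((x + 1) / 2) ^ k := by
  have hformula := iteratedDeriv_eqOn_of_hasDerivAt (F := legendreMulLogDeriv n)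
    isOpen_compl_singleton (fun _ hj _ hy => hasDerivAt_legendreMulLogDeriv hj hy) m hmn hx
  rwa [legendreMulLogDeriv_zero] at hformula

theorem stmt_5 (m n : ℕ) (hmn : m ≤ n) (x : ℝ) (hx : 1 < x) :
    iteratedDeriv m (fun y => legendreP n y * Real.log (y - 1)) x =
      iteratedDeriv m (legendreP n) x * Real.log (x - 1)
      + (psi (n + m + 1) - psi (n - m + 1)) * iteratedDeriv m (legendreP n) x
      - (-1 : ℝ) ^ (n + m) * (2 : ℝ) ^ (-(m : ℤ)) *
          ∑ k ∈ Finset.range (n - m + 1),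
            (-1 : ℝ) ^ k * ((k + n + m).factorial : ℝ) /
                ((k.factorial : ℝ) * ((k + m).factorial : ℝ) * ((n - m - k).factorial : ℝ)) *
              (2 * psi (k + n + m + 1) - psi (k + m + 1)) * ((x + 1) / 2) ^ k
      + (-1 : ℝ) ^ n * ((n + m).factorial : ℝ) / ((n - m).factorial : ℝ) *
            (x - 1) ^ (-(m : ℤ)) *
          ∑ k ∈ Finset.range (n + 1),
            (-1 : ℝ) ^ k * ((k + n).factorial : ℝ) /
                ((k.factorial : ℝ) * ((k + m).factorial : ℝ) * ((n - k).factorial : ℝ)) *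
              (2 * psi (k + n + 1) - psi (k + m + 1)) * ((x + 1) / 2) ^ k := by
  simpa only [Real.log_abs] using stmt_5_general m n hmn x hx.ne'
end

section
/- Let m, n be natural numbers with 0 ≤ m ≤ n, and let x > 1 be real. Then d^m/dx^m [P_n(x)·log(x+1)] = P_n^{(m)}(x)·log(x+1) + (ψ(n+1) − ψ(n−m+1))·P_n^{(m)}(x) + (−1)^n·((n+m)!/(n−m)!)·(x+1)^{−m} Σ_{k=0}^{m−1} (−1)^k·((2k+1)/((n−k)(k+n+1))) · Σ_{j=0}^{k} ((k+j)!/((k−j)!·(m+j)!·j!))·((x−1)/2)^j − (−1)^{n+m} Σ_{k=0}^{n−m−1} (−1)^k·((2k+2m+1)/((n−m−k)(k+n+m+1)))·(1 − (k!·(n+m)!)/((k+2m)!·(n−m)!))·P_{k+m}^{(m)}(x). -/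
open Finset Real

/-! Write `Q k m` for `(x² - 1) ^ (-m / 2) P_k^{-m}(x)`. Its derivative is
`(k - m) (k + m + 1) Q k (m + 1)`. Division by `x + 1` also raises the order `m` by one, at the
cost of a sum of `(-1) ^ k (2 k + 1) Q k (m + 1)` over the lower degrees. Hence the derivatives of
`P_n(x) log (x + 1)` have a closed form in `log (x + 1)` and the `Q k m` with `k ≤ n`, and it
propagates from `m` to `m + 1` because
`(n - m) (n + m + 1) - (k - m) (k + m + 1) = (n - k) (k + n + 1)`.
The `m`-th derivative of `P_k` is `(k + m)! / (k - m)! * Q k m`, which is zero for `k < m`: these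
degrees make up the first sum of the theorem, the remaining ones the second. -/

section LegendreRatio

/-- The ratio `(k + m)! / (k - m)!` between the associated Legendre functions of degree `k` and of
orders `m` and `-m`. The falling factorial makes it vanish for `k < m`, where the quotient of
factorials would be spoiled by truncated subtraction. -/
def legendreRatio (k m : ℕ) : ℝ := (k + m).descFactorial (2 * m)

lemma legendreRatio_zero (k : ℕ) : legendreRatio k 0 = 1 := by simp [legendreRatio]

lemma legendreRatio_eq_zero {k m : ℕ} (h : k < m) : legendreRatio k m = 0 := by
  rw [legendreRatio, Nat.descFactorial_of_lt (by lia), Nat.cast_zero]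

lemma legendreRatio_eq_div {k m : ℕ} (h : m ≤ k) :
    legendreRatio k m = ((k + m).factorial : ℝ) / ((k - m).factorial : ℝ) := by
  have hmul := Nat.factorial_mul_descFactorial (show 2 * m ≤ k + m by lia)
  rw [show k + m - 2 * m = k - m by lia] at hmul
  rw [legendreRatio, eq_div_iff (by positivity), mul_comm]
  exact_mod_cast hmul

lemma legendreRatio_pos {k m : ℕ} (h : m ≤ k) : 0 < legendreRatio k m := by
  rw [legendreRatio_eq_div h]
  positivity

lemma legendreRatio_succ_right (k m : ℕ) :
    legendreRatio k (m + 1) = (k - m) * (k + m + 1) * legendreRatio k m := by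
  rcases lt_or_ge k m with h | h
  · rw [legendreRatio_eq_zero h, legendreRatio_eq_zero (by lia), mul_zero]
  · rw [legendreRatio, legendreRatio, ← add_assoc, mul_add_one, Nat.succ_descFactorial_succ,
      Nat.descFactorial_succ, show k + m - 2 * m = k - m by lia]
    push_cast [h]
    ring

lemma legendreRatio_succ_left (k m : ℕ) :
    (k + 1 - m) * legendreRatio (k + 1) m = (k + 1 + m) * legendreRatio k m := by
  induction m with
  | zero => simp [legendreRatio_zero]
  | succ m ih =>
    simp only [legendreRatio_succ_right]
    push_cast
    linear_combination ((k : ℝ) - m) * (k + m + 2) * ih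

end LegendreRatio

section NegOrderPoly

open Polynomial

/-- The polynomial `∑ j, (k + j)! / ((k - j)! (m + j)! j!) X ^ j`, which at `X = (x - 1) / 2` is
`(x + 1) ^ m` times `(x² - 1) ^ (-m / 2) P_k^{-m}(x)`. -/
noncomputable def negOrderPoly (k m : ℕ) : ℝ[X] :=
  ∑ j ∈ range (k + 1), C (legendreRatio k j / ((m + j).factorial * j.factorial)) * X ^ j

lemma coeff_negOrderPoly (k m j : ℕ) :
    (negOrderPoly k m).coeff j = legendreRatio k j / ((m + j).factorial * j.factorial) := by
  simp only [negOrderPoly, finsetSum_coeff, coeff_C_mul_X_pow, sum_ite_eq, mem_range]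
  split_ifs with h
  · rfl
  · rw [legendreRatio_eq_zero (by lia), zero_div]

lemma negOrderPoly_zero_left (m : ℕ) : negOrderPoly 0 m = C (1 / (m.factorial : ℝ)) := by
  simp [negOrderPoly, legendreRatio_zero]

lemma eval_negOrderPoly (k m : ℕ) (t : ℝ) :
    (negOrderPoly k m).eval t = ∑ j ∈ range (k + 1), ((k + j).factorial : ℝ) /
      (((k - j).factorial : ℝ) * ((m + j).factorial : ℝ) * (j.factorial : ℝ)) * t ^ j := by
  simp only [negOrderPoly, eval_finsetSum, eval_mul, eval_C, eval_pow, eval_X]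
  refine sum_congr rfl fun j hj => ?_
  rw [legendreRatio_eq_div (Nat.lt_succ_iff.mp (mem_range.mp hj)), div_div, mul_assoc]

lemma one_add_X_mul_derivative_negOrderPoly (k m : ℕ) :
    (1 + X) * derivative (negOrderPoly k m) =
      C (m : ℝ) * negOrderPoly k m + C ((k - m) * (k + m + 1) : ℝ) * negOrderPoly k (m + 1) := by
  have coeff_X_mul_derivative (p : ℝ[X]) (j : ℕ) : (X * derivative p).coeff j = j * p.coeff j := by
    cases j with
    | zero => simp
    | succ j => rw [coeff_X_mul, coeff_derivative]; push_cast; ring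
  ext j
  simp only [add_mul, one_mul, coeff_add, coeff_C_mul, coeff_X_mul_derivative, coeff_derivative,
    coeff_negOrderPoly, legendreRatio_succ_right, ← add_assoc, add_right_comm m 1 j,
    Nat.factorial_succ]
  push_cast
  field_simp
  ring

lemma negOrderPoly_succ_add (n m : ℕ) :
    negOrderPoly (n + 1) m + negOrderPoly n m =
      C (n + m + 2 : ℝ) * negOrderPoly (n + 1) (m + 1) +
        C (m - n : ℝ) * negOrderPoly n (m + 1) := by
  ext j
  have hratio := legendreRatio_succ_left n j
  simp only [coeff_add, coeff_C_mul, coeff_negOrderPoly, add_right_comm m 1 j, Nat.factorial_succ]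
  push_cast
  field_simp
  linear_combination -hratio

lemma eval_negOrderPoly_eq_sum (n m : ℕ) (t : ℝ) :
    (negOrderPoly n m).eval t = (n + m + 1) * (negOrderPoly n (m + 1)).eval t +
      (-1) ^ n * ∑ k ∈ range n, (-1) ^ k * (2 * k + 1) * (negOrderPoly k (m + 1)).eval t := by
  induction n with
  | zero =>
    rw [negOrderPoly_zero_left, negOrderPoly_zero_left, eval_C, eval_C, range_zero, sum_empty,
      Nat.factorial_succ]
    push_cast
    field_simp
    ring
  | succ n ih =>
    have hstep := congrArg (eval t) (negOrderPoly_succ_add n m)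
    simp only [eval_add, eval_mul, eval_C] at hstep
    have hsign : (-1 : ℝ) ^ n * (-1) ^ n = 1 := by rw [← mul_pow]; simp
    rw [sum_range_succ, pow_succ]
    push_cast
    linear_combination hstep - ih + (2 * n + 1) * (negOrderPoly n (m + 1)).eval t * hsign

end NegOrderPoly

section NegOrderLegendre

open Polynomial

/-- The function `(x² - 1) ^ (-m / 2) P_k^{-m}(x)`: the associated Legendre function of degree `k`
and order `-m`, normalised to be rational, with no pole except possibly at `-1`. -/
noncomputable def negOrderLegendre (k m : ℕ) (x : ℝ) : ℝ :=
  (x + 1) ^ (-(m : ℤ)) * (negOrderPoly k m).eval ((x - 1) / 2)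

lemma negOrderLegendre_zero (n : ℕ) : negOrderLegendre n 0 = legendreP n := by
  ext x
  simp only [negOrderLegendre, eval_negOrderPoly, legendreP, Nat.cast_zero, neg_zero, zpow_zero,
    one_mul, zero_add]
  refine sum_congr rfl fun j _ => ?_
  congr 2
  ring

lemma hasDerivAt_negOrderLegendre (k m : ℕ) {x : ℝ} (hx : x ≠ -1) :
    HasDerivAt (negOrderLegendre k m)
      ((k - m) * (k + m + 1) * negOrderLegendre k (m + 1) x) x := by
  have hx₁ : x + 1 ≠ 0 := add_eq_zero_iff_eq_neg.not.mpr hx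
  have hpow : HasDerivAt (fun y => (y + 1) ^ (-(m : ℤ)))
      (-m * (x + 1) ^ (-((m + 1 : ℕ) : ℤ))) x := by
    refine ((hasDerivAt_zpow (-(m : ℤ)) (x + 1) (.inl hx₁)).comp_add_const x 1).congr_deriv ?_
    rw [show -(m : ℤ) - 1 = -((m + 1 : ℕ) : ℤ) by push_cast; ring, Int.cast_neg, Int.cast_natCast]
  have hlin : HasDerivAt (fun y : ℝ => (y - 1) / 2) (1 / 2) x :=
    ((hasDerivAt_id x).sub_const 1).div_const 2
  have hpoly : HasDerivAt (fun y => (negOrderPoly k m).eval ((y - 1) / 2))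
      ((derivative (negOrderPoly k m)).eval ((x - 1) / 2) * (1 / 2)) x :=
    HasDerivAt.comp (h₂ := (eval · (negOrderPoly k m))) x
      ((negOrderPoly k m).hasDerivAt ((x - 1) / 2)) hlin
  have hode := congrArg (eval ((x - 1) / 2)) (one_add_X_mul_derivative_negOrderPoly k m)
  simp only [eval_add, eval_mul, eval_C, eval_one, eval_X] at hode
  have hpow_eq : (x + 1) ^ (-(m : ℤ)) = (x + 1) * (x + 1) ^ (-((m + 1 : ℕ) : ℤ)) := by
    rw [← zpow_one_add₀ hx₁]
    congr 1
    push_cast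
    ring
  refine (hpow.mul hpoly).congr_deriv ?_
  rw [hpow_eq, negOrderLegendre]
  linear_combination (x + 1) ^ (-((m + 1 : ℕ) : ℤ)) * hode

lemma negOrderLegendre_div_add_one (n m : ℕ) (x : ℝ) :
    negOrderLegendre n m x / (x + 1) = (n + m + 1) * negOrderLegendre n (m + 1) x +
      (-1) ^ n * ∑ k ∈ range n, (-1) ^ k * (2 * k + 1) * negOrderLegendre k (m + 1) x := by
  have hpow : (x + 1) ^ (-((m + 1 : ℕ) : ℤ)) = (x + 1) ^ (-(m : ℤ)) / (x + 1) := by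
    simp only [zpow_neg, zpow_natCast, pow_succ, mul_inv, div_eq_mul_inv]
  have hsum : ∑ k ∈ range n, (-1) ^ k * (2 * k + 1) * negOrderLegendre k (m + 1) x =
      (x + 1) ^ (-(m : ℤ)) / (x + 1) * ∑ k ∈ range n, (-1) ^ k * (2 * k + 1) *
        (negOrderPoly k (m + 1)).eval ((x - 1) / 2) := by
    rw [mul_sum]
    exact sum_congr rfl fun k _ => by rw [negOrderLegendre, hpow]; ring
  rw [hsum, negOrderLegendre, negOrderLegendre, hpow, eval_negOrderPoly_eq_sum n m]
  ring

end NegOrderLegendre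

section IteratedDeriv

lemma iteratedDeriv_succ_eq_of_eventuallyEq {𝕜 F : Type*} [NontriviallyNormedField 𝕜]
    [NormedAddCommGroup F] [NormedSpace 𝕜 F] {f g : 𝕜 → F} {m : ℕ} {x : 𝕜} {g' : F}
    (hfg : iteratedDeriv m f =ᶠ[nhds x] g) (hg : HasDerivAt g g' x) :
    iteratedDeriv (m + 1) f x = g' := by
  rw [iteratedDeriv_succ, hfg.deriv_eq, hg.deriv]

lemma iteratedDeriv_legendreP_s8 (n m : ℕ) {x : ℝ} (hx : x ≠ -1) :
    iteratedDeriv m (legendreP n) x = legendreRatio n m * negOrderLegendre n m x := by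
  induction m generalizing x with
  | zero => rw [iteratedDeriv_zero, legendreRatio_zero, negOrderLegendre_zero, one_mul]
  | succ m ih =>
    have hev := (eventually_ne_nhds hx).mono fun y hy => ih hy
    rw [iteratedDeriv_succ_eq_of_eventuallyEq hev
      ((hasDerivAt_negOrderLegendre n m hx).const_mul _), legendreRatio_succ_right]
    ring

end IteratedDeriv

section LegendreLogDeriv

lemma psi_succ {j : ℕ} (hj : j ≠ 0) : psi (j + 1) = psi j + 1 / j := by
  obtain ⟨i, rfl⟩ := Nat.exists_eq_succ_of_ne_zero hj
  simp only [psi, harm, Nat.succ_eq_add_one, Nat.add_sub_cancel, sum_range_succ]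
  push_cast
  ring

/-- The weight, up to the sign `(-1) ^ n`, of the terms of degree `k` in the derivatives of
`P_n(x) log (x + 1)`. Its denominator `(n - k) (k + n + 1)` is the difference
`n (n + 1) - k (k + 1)` of the eigenvalues of the Legendre operator. -/
noncomputable def legendreLogCoeff (n k : ℕ) : ℝ :=
  (-1) ^ k * ((2 * k + 1) / ((n - k) * (k + n + 1)))

lemma mul_legendreLogCoeff {n k : ℕ} (h : k < n) :
    (n - k) * (k + n + 1) * legendreLogCoeff n k = (-1) ^ k * (2 * k + 1) := by
  have hsub : (n : ℝ) - k ≠ 0 := sub_ne_zero.mpr (by exact_mod_cast h.ne')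
  rw [legendreLogCoeff]
  field_simp

/-- The closed form of the `m`-th derivative of `P_n(x) log (x + 1)` in terms of the functions
`negOrderLegendre k m`, with a single sum over all degrees `k < n`. -/
noncomputable def legendreLogDeriv (n m : ℕ) (x : ℝ) : ℝ :=
  legendreRatio n m * negOrderLegendre n m x * (log (x + 1) + (psi (n + 1) - psi (n - m + 1))) -
    (-1) ^ n * ∑ k ∈ range n,
      legendreLogCoeff n k * (legendreRatio k m - legendreRatio n m) * negOrderLegendre k m x

lemma legendreLogCoeff_mul_legendreRatio_sub {n k : ℕ} (h : k < n) (m : ℕ) :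
    legendreLogCoeff n k * (legendreRatio k m - legendreRatio n m) * ((k - m) * (k + m + 1)) =
      legendreLogCoeff n k * (legendreRatio k (m + 1) - legendreRatio n (m + 1)) +
        legendreRatio n m * ((-1) ^ k * (2 * k + 1)) := by
  rw [legendreRatio_succ_right, legendreRatio_succ_right, ← mul_legendreLogCoeff h]
  ring

lemma hasDerivAt_legendreLogDeriv {n m : ℕ} (h : m < n) {x : ℝ} (hx : x ≠ -1) :
    HasDerivAt (legendreLogDeriv n m) (legendreLogDeriv n (m + 1) x) x := by
  have hnm : (n : ℝ) - m ≠ 0 := sub_ne_zero.mpr (by exact_mod_cast h.ne')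
  have hlog : HasDerivAt (fun y => log (y + 1)) (1 / (x + 1)) x :=
    ((hasDerivAt_id x).add_const 1).log (add_eq_zero_iff_eq_neg.not.mpr hx)
  have hmain := ((hasDerivAt_negOrderLegendre n m hx).const_mul (legendreRatio n m)).mul
    (hlog.add_const (psi (n + 1) - psi (n - m + 1)))
  have hsum := (HasDerivAt.fun_sum (u := range n) fun k _ =>
    (hasDerivAt_negOrderLegendre k m hx).const_mul
      (legendreLogCoeff n k * (legendreRatio k m - legendreRatio n m))).const_mul ((-1 : ℝ) ^ n)
  have hpsi : psi (n - m + 1) = psi (n - (m + 1) + 1) + 1 / (n - m) := by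
    rw [psi_succ (by lia), Nat.cast_sub h.le, show n - (m + 1) + 1 = n - m by lia]
  have hterm (k : ℕ) (hk : k ∈ range n) :
      legendreLogCoeff n k * (legendreRatio k m - legendreRatio n m) *
          ((k - m) * (k + m + 1) * negOrderLegendre k (m + 1) x) =
        legendreLogCoeff n k * (legendreRatio k (m + 1) - legendreRatio n (m + 1)) *
            negOrderLegendre k (m + 1) x +
          legendreRatio n m * ((-1) ^ k * (2 * k + 1) * negOrderLegendre k (m + 1) x) := by
    linear_combination negOrderLegendre k (m + 1) x *
      legendreLogCoeff_mul_legendreRatio_sub (mem_range.mp hk) m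
  refine (hmain.sub hsum).congr_deriv ?_
  rw [sum_congr rfl hterm, sum_add_distrib, ← mul_sum, legendreLogDeriv, hpsi,
    legendreRatio_succ_right n m]
  linear_combination legendreRatio n m * negOrderLegendre_div_add_one n m x -
    (n + m + 1) * legendreRatio n m * negOrderLegendre n (m + 1) x * mul_one_div_cancel hnm

lemma iteratedDeriv_legendreP_mul_log {n m : ℕ} (hmn : m ≤ n) {x : ℝ} (hx : x ≠ -1) :
    iteratedDeriv m (fun y => legendreP n y * log (y + 1)) x = legendreLogDeriv n m x := by
  induction m generalizing x with
  | zero => simp [legendreLogDeriv, legendreRatio_zero, negOrderLegendre_zero]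
  | succ m ih =>
    exact iteratedDeriv_succ_eq_of_eventuallyEq
      ((eventually_ne_nhds hx).mono fun y hy => ih (by lia) hy)
      (hasDerivAt_legendreLogDeriv hmn hx)

end LegendreLogDeriv

section SplitSum

lemma sum_range_order_legendreLogCoeff {n m : ℕ} (hmn : m ≤ n) (x : ℝ) :
    ∑ k ∈ range m, legendreLogCoeff n k * (legendreRatio k m - legendreRatio n m) *
        negOrderLegendre k m x =
      -(((n + m).factorial : ℝ) / ((n - m).factorial : ℝ) * (x + 1) ^ (-(m : ℤ)) *
        ∑ k ∈ range m, (-1 : ℝ) ^ k * ((2 * k + 1 : ℝ) / (((n : ℝ) - k) * ((k : ℝ) + n + 1))) *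
          ∑ j ∈ range (k + 1), ((k + j).factorial : ℝ) /
            (((k - j).factorial : ℝ) * ((m + j).factorial : ℝ) * (j.factorial : ℝ)) *
              ((x - 1) / 2) ^ j) := by
  rw [mul_sum, ← sum_neg_distrib]
  refine sum_congr rfl fun k hk => ?_
  rw [legendreRatio_eq_zero (mem_range.mp hk), ← legendreRatio_eq_div hmn, negOrderLegendre,
    eval_negOrderPoly, legendreLogCoeff]
  ring

lemma legendreLogCoeff_add (n m k : ℕ) :
    legendreLogCoeff n (k + m) = (-1) ^ m * ((-1) ^ k *
      ((2 * k + 2 * m + 1) / ((n - m - k) * (k + n + m + 1)))) := by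
  rw [legendreLogCoeff]
  push_cast
  ring_nf

lemma legendreRatio_div_legendreRatio_add {n m : ℕ} (hmn : m ≤ n) (k : ℕ) :
    legendreRatio n m / legendreRatio (k + m) m =
      ((k.factorial : ℝ) * ((n + m).factorial : ℝ)) /
        (((k + 2 * m).factorial : ℝ) * ((n - m).factorial : ℝ)) := by
  rw [legendreRatio_eq_div hmn, legendreRatio_eq_div (Nat.le_add_left m k), Nat.add_sub_cancel,
    add_assoc k m m, ← two_mul, div_div_div_eq]
  ring

lemma sum_Ico_order_legendreLogCoeff {n m : ℕ} (hmn : m ≤ n) {x : ℝ} (hx : x ≠ -1) :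
    ∑ k ∈ Ico m n, legendreLogCoeff n k * (legendreRatio k m - legendreRatio n m) *
        negOrderLegendre k m x =
      (-1 : ℝ) ^ m * ∑ k ∈ range (n - m), (-1 : ℝ) ^ k *
        ((2 * k + 2 * m + 1 : ℝ) / (((n : ℝ) - m - k) * ((k : ℝ) + n + m + 1))) *
          (1 - ((k.factorial : ℝ) * ((n + m).factorial : ℝ)) /
            (((k + 2 * m).factorial : ℝ) * ((n - m).factorial : ℝ))) *
          iteratedDeriv m (legendreP (k + m)) x := by
  rw [sum_Ico_eq_sum_range, mul_sum]
  refine sum_congr rfl fun k _ => ?_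
  have hpos := legendreRatio_pos (Nat.le_add_left m k)
  have hratio : legendreRatio (k + m) m - legendreRatio n m =
      (1 - legendreRatio n m / legendreRatio (k + m) m) * legendreRatio (k + m) m := by
    field_simp
  rw [iteratedDeriv_legendreP_s8 _ _ hx, add_comm m k, legendreLogCoeff_add, hratio,
    legendreRatio_div_legendreRatio_add hmn]
  ring

end SplitSum

/-- For `x < -1`, `Real.log (x + 1)` means `log |x + 1|`. -/
theorem stmt_8_general (m n : ℕ) (hmn : m ≤ n) (x : ℝ) (hx : x ≠ -1) :
    iteratedDeriv m (fun y => legendreP n y * Real.log (y + 1)) x =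
      iteratedDeriv m (legendreP n) x * Real.log (x + 1)
      + (psi (n + 1) - psi (n - m + 1)) * iteratedDeriv m (legendreP n) x
      + (-1 : ℝ) ^ n * ((n + m).factorial : ℝ) / ((n - m).factorial : ℝ) *
            (x + 1) ^ (-(m : ℤ)) *
          ∑ k ∈ Finset.range m,
            (-1 : ℝ) ^ k * ((2 * k + 1 : ℝ) / (((n : ℝ) - k) * ((k : ℝ) + n + 1))) *
              ∑ j ∈ Finset.range (k + 1),
                ((k + j).factorial : ℝ) /
                    (((k - j).factorial : ℝ) * ((m + j).factorial : ℝ) *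
                      (j.factorial : ℝ)) * ((x - 1) / 2) ^ j
      - (-1 : ℝ) ^ (n + m) *
          ∑ k ∈ Finset.range (n - m),
            (-1 : ℝ) ^ k *
              ((2 * k + 2 * m + 1 : ℝ) / (((n : ℝ) - m - k) * ((k : ℝ) + n + m + 1))) *
              (1 - ((k.factorial : ℝ) * ((n + m).factorial : ℝ)) /
                  (((k + 2 * m).factorial : ℝ) * ((n - m).factorial : ℝ))) *
              iteratedDeriv m (legendreP (k + m)) x := by
  rw [iteratedDeriv_legendreP_mul_log hmn hx, legendreLogDeriv, ← iteratedDeriv_legendreP_s8 n m hx,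
    ← sum_range_add_sum_Ico _ hmn, sum_range_order_legendreLogCoeff hmn,
    sum_Ico_order_legendreLogCoeff hmn hx]
  ring

theorem stmt_8 (m n : ℕ) (hmn : m ≤ n) (x : ℝ) (hx : 1 < x) :
    iteratedDeriv m (fun y => legendreP n y * Real.log (y + 1)) x =
      iteratedDeriv m (legendreP n) x * Real.log (x + 1)
      + (psi (n + 1) - psi (n - m + 1)) * iteratedDeriv m (legendreP n) x
      + (-1 : ℝ) ^ n * ((n + m).factorial : ℝ) / ((n - m).factorial : ℝ) *
            (x + 1) ^ (-(m : ℤ)) *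
          ∑ k ∈ Finset.range m,
            (-1 : ℝ) ^ k * ((2 * k + 1 : ℝ) / (((n : ℝ) - k) * ((k : ℝ) + n + 1))) *
              ∑ j ∈ Finset.range (k + 1),
                ((k + j).factorial : ℝ) /
                    (((k - j).factorial : ℝ) * ((m + j).factorial : ℝ) *
                      (j.factorial : ℝ)) * ((x - 1) / 2) ^ j
      - (-1 : ℝ) ^ (n + m) *
          ∑ k ∈ Finset.range (n - m),
            (-1 : ℝ) ^ k *
              ((2 * k + 2 * m + 1 : ℝ) / (((n : ℝ) - m - k) * ((k : ℝ) + n + m + 1))) *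
              (1 - ((k.factorial : ℝ) * ((n + m).factorial : ℝ)) /
                  (((k + 2 * m).factorial : ℝ) * ((n - m).factorial : ℝ))) *
              iteratedDeriv m (legendreP (k + m)) x :=
  stmt_8_general m n hmn x (by linarith)
end
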